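/- arXiv:1302.4251 — 3 statements merged into one kernel-verified Lean document; each statement's English description precedes it below -/
import Mathlib

section
/- Let q be a prime number, s ∈ ℕ, m ∈ ℕ, and let k₁,…,k_s ∈ ℕ₀, not all of them 0. Let M_m(k₁,…,k_s) = {(C₁,…,C_s) ∈ ((ZMod q)^{ℕ×ℕ})^s : ν(C₁ᵀk⃗₁ + ⋯ + C_sᵀk⃗_s) ≤ −m}, i.e. the set of matrix tuples for which the first m−1 coordinates of the vector C₁ᵀk⃗₁ + ⋯ + C_sᵀk⃗_s ∈ (ZMod q)^ℕ all vanish. Then μ_s(M_m(k₁,…,k_s)) = q^{−(m−1)}. -/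
/-!
Stack the first digits of all the `k u` into one vector `w`, and the matching entries of the
matrices `(C u)ᵀ` into one matrix `A` with `m - 1` rows: the first `m - 1` coordinates of
`∑ u, (C u)ᵀ (k u)` are then `A w`. Under `μs` the finite matrix `A` is uniformly distributed, and
`A ↦ A w` is a homomorphism of finite groups which is surjective as soon as the entries of `w`
generate the unit ideal. Such a homomorphism carries the uniform distribution to the uniform
distribution, so `A w = 0` has probability `q⁻¹ ^ (m - 1)`. For `q` prime, the leading digit of a
nonzero `k u` is a unit.
-/

open MeasureTheory Filter
open scoped ENNReal

noncomputable section

/-- The base-`q` digit vector `k⃗ = (κ₀, κ₁, κ₂, …)` of a natural number `k`,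
with values in `ZMod q`. -/
def digitVec (q k : ℕ) : ℕ → ZMod q := fun i => ((k / q ^ i) % q : ℕ)

/-- `len q k = ⌊log_q k⌋`, the index of the leading base-`q` digit of `k`. -/
def len (q k : ℕ) : ℕ := Nat.log q k

/-- Transpose of an `ℕ × ℕ` matrix over `ZMod q`. -/
def transp {q : ℕ} (C : ℕ → ℕ → ZMod q) : ℕ → ℕ → ZMod q := fun i j => C j i

/-- The matrix `C` applied to the digit vector of `k` (a finite sum, since the digit
vector of `k` is supported on indices `≤ k`), all arithmetic modulo `q`. -/
def matVec {q : ℕ} (C : ℕ → ℕ → ZMod q) (k : ℕ) : ℕ → ZMod q :=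
  fun i => ∑ j ∈ Finset.range (k + 1), C i j * digitVec q k j

/-- `nuLe b m` expresses `ν(b⃗) ≤ -m` for `b⃗ = (b₁, b₂, …) = (b 0, b 1, …)`:
the first `m - 1` coordinates of `b⃗` vanish.  (In particular it holds for `b⃗ = 0⃗`,
where `ν(0⃗) = -∞`.) -/
def nuLe {q : ℕ} (b : ℕ → ZMod q) (m : ℕ) : Prop := ∀ i, i < m - 1 → b i = 0

/-- `ω_q = exp(2πi/q)`. -/
def omega (q : ℕ) : ℂ := Complex.exp (2 * Real.pi * Complex.I / q)

/-- The value of the `j`-th `q`-adic Walsh function on a digit vector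
`v⃗ = (v₁, v₂, …) = (v 0, v 1, …)`: with `j = j₀ + j₁ q + ⋯`, this is
`ω_q^(j₀ v₁ + j₁ v₂ + ⋯)`, the exponent computed in `ZMod q` (a finite sum, since all
base-`q` digits of `j` with index `≥ j` vanish). -/
def wal (q j : ℕ) (v : ℕ → ZMod q) : ℂ :=
  omega q ^ (∑ i ∈ Finset.range (j + 1), digitVec q j i * v i).val

/-- The digit `ξ_{i+1} ∈ ZMod q` of the `q`-adic expansion
`x = ξ₁ q⁻¹ + ξ₂ q⁻² + ⋯` of `x ∈ [0,1)` (the expansion with infinitely many digits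
different from `q - 1`). -/
def realDigit (q : ℕ) (x : ℝ) : ℕ → ZMod q := fun i => ((⌊x * (q : ℝ) ^ (i + 1)⌋ : ℤ) : ZMod q)

/-- The `j`-th `q`-adic Walsh function `wal_j : [0,1) → ℂ`. -/
def walReal (q j : ℕ) (x : ℝ) : ℂ := wal q j (realDigit q x)

/-- The digital sequence over `ZMod q` with generating matrices `C 1, …, C s`:
the `j`-th coordinate of the `n`-th point is `x_{n,j} = Σ_i (C_j n⃗)_i q^{-(i+1)}`. -/
def digitalSeq {q s : ℕ} (C : Fin s → ℕ → ℕ → ZMod q) (n : ℕ) : Fin s → ℝ :=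
  fun j => ∑' i : ℕ, ((matVec (C j) n i).val : ℝ) / (q : ℝ) ^ (i + 1)

/-- The local discrepancy `D(x, N)` of the sequence `y` in `[0,1)^s`. -/
def localDisc {s : ℕ} (y : ℕ → Fin s → ℝ) (x : Fin s → ℝ) (N : ℕ) : ℝ :=
  (Nat.card {n : ℕ | n < N ∧ ∀ j, y n j ∈ Set.Ico 0 (x j)} : ℝ) - N * ∏ j, x j

/-- The star discrepancy `D*_N` of the sequence `y` in `[0,1)^s`. -/
def starDisc {s : ℕ} (y : ℕ → Fin s → ℝ) (N : ℕ) : ℝ :=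
  sSup {d : ℝ | ∃ x : Fin s → ℝ, (∀ j, x j ∈ Set.Icc (0 : ℝ) 1) ∧ d = |localDisc y x N|}

/-- `IsUniformMatrixMeasure μ` says that `μ` is the measure `μ` of the paper on the
space `(ZMod q)^{ℕ×ℕ}` of `ℕ × ℕ` matrices over `ZMod q`: the product over `ℕ × ℕ` of
uniform probability measures on `ZMod q`, characterized as the probability measure
giving each finite cylinder set (finitely many prescribed entries) the measure
`q^{-(number of prescribed entries)}`. -/
def IsUniformMatrixMeasure {q : ℕ} (μ : Measure (ℕ → ℕ → ZMod q)) : Prop :=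
  IsProbabilityMeasure μ ∧
    ∀ (F : Finset (ℕ × ℕ)) (g : ℕ × ℕ → ZMod q),
      μ {C | ∀ p ∈ F, C p.1 p.2 = g p} = ((q : ℝ≥0∞)⁻¹) ^ F.card

/-- `IsUniformMatrixTupleMeasure μs` says that `μs` is the measure `μ_s` of the paper on
the space `((ZMod q)^{ℕ×ℕ})^s` of `s`-tuples of `ℕ × ℕ` matrices over `ZMod q`: the
`s`-fold product of the product over `ℕ × ℕ` of uniform probability measures on
`ZMod q`, characterized as the probability measure giving each finite cylinder set
(finitely many prescribed entries) the measure `q^{-(number of prescribed entries)}`. -/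
def IsUniformMatrixTupleMeasure {q s : ℕ} (μs : Measure (Fin s → ℕ → ℕ → ZMod q)) : Prop :=
  IsProbabilityMeasure μs ∧
    ∀ (F : Finset (Fin s × ℕ × ℕ)) (g : Fin s × ℕ × ℕ → ZMod q),
      μs {C | ∀ p ∈ F, C p.1 p.2.1 p.2.2 = g p} = ((q : ℝ≥0∞)⁻¹) ^ F.card

open ProbabilityTheory Function Matrix

section UniformOn

variable {A B : Type*} [AddGroup A] [AddGroup B] {f : A →+ B}

lemma card_fiber_mul_card_of_surjective [Fintype A] [Fintype B] [DecidableEq B]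
    (hf : Surjective f) (b : B) :
    Finset.card {a | f a = b} * Fintype.card B = Fintype.card A := by
  calc Finset.card {a | f a = b} * Fintype.card B
      = ∑ b' : B, Finset.card {a | f a = b'} := by
        rw [Finset.sum_congr rfl fun b' _ ↦
            AddMonoidHom.card_fiber_eq_of_mem_range f (hf b') (hf b), Finset.sum_const,
          Finset.card_univ, smul_eq_mul, mul_comm]
    _ = Fintype.card A :=
        (Finset.card_eq_sum_card_fiberwise fun _ _ ↦ Finset.mem_coe.2 (Finset.mem_univ _)).symm

lemma uniformOn_univ_singleton {Ω : Type*} [MeasurableSpace Ω] [MeasurableSingletonClass Ω]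
    [Fintype Ω] (ω : Ω) : uniformOn Set.univ {ω} = (Fintype.card Ω : ℝ≥0∞)⁻¹ := by
  rw [uniformOn_univ, Measure.count_singleton, one_div]

lemma map_uniformOn_univ_of_surjective [Finite A] [MeasurableSpace A] [MeasurableSingletonClass A]
    [MeasurableSpace B] [MeasurableSingletonClass B] (hf : Surjective f) :
    (uniformOn Set.univ).map f = uniformOn Set.univ := by
  classical
  have := Fintype.ofFinite A
  have := Fintype.ofSurjective f hf
  refine Measure.ext_of_singleton fun b ↦ ?_
  have hfiber : f ⁻¹' {b} = ({a | f a = b} : Finset A) := by ext; simp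
  rw [Measure.map_apply (measurable_of_finite f) (measurableSet_singleton b), uniformOn_univ,
    uniformOn_univ_singleton, hfiber, Measure.count_apply_finset,
    ← card_fiber_mul_card_of_surjective hf b, Nat.cast_mul]
  have hpos : Finset.card {a | f a = b} ≠ 0 := by
    obtain ⟨a, ha⟩ := hf b
    exact Finset.card_ne_zero_of_mem (Finset.mem_filter.2 ⟨Finset.mem_univ a, ha⟩)
  rw [← one_div, ← ENNReal.mul_div_mul_left 1 _ (Nat.cast_ne_zero.2 hpos)
    (ENNReal.natCast_ne_top _), mul_one]

end UniformOn

lemma mulVec_surjective_of_span_eq_top {m n R : Type*} [Fintype n] [Semiring R] {w : n → R}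
    (hw : Ideal.span (Set.range w) = ⊤) : Surjective fun A : Matrix m n R ↦ A *ᵥ w := by
  obtain ⟨v, hv⟩ : ∃ v : n → R, v ⬝ᵥ w = 1 :=
    Ideal.mem_span_range_iff_exists_fun.1 (hw ▸ Submodule.mem_top)
  exact fun b ↦ ⟨vecMulVec b v, by simp [vecMulVec_mulVec, hv]⟩

lemma map_mulVec_uniformOn_univ {m n R : Type*} [Finite m] [Fintype n] [Ring R] [Finite R]
    [MeasurableSpace R] [MeasurableSingletonClass R] {w : n → R}
    (hw : Ideal.span (Set.range w) = ⊤) :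
    (uniformOn Set.univ).map (fun A : m → n → R ↦ of A *ᵥ w) = uniformOn Set.univ :=
  map_uniformOn_univ_of_surjective
    (f := (mulVec.addMonoidHomLeft w).comp (ofAddEquiv (m := m)).toAddMonoidHom)
    (mulVec_surjective_of_span_eq_top hw)

section JointDigits

variable {q s : ℕ}

/-- The concatenation of the digit vectors of `k 0, …, k (s - 1)`, where the digits of `k u` are cut
off after index `k u`, as they are in `matVec`. -/
def jointDigitVec (q : ℕ) (k : Fin s → ℕ) : (Σ u, Fin (k u + 1)) → ZMod q :=
  fun a ↦ digitVec q (k a.1) a.2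

/-- The first `n` rows of the block matrix `((C 0)ᵀ | ⋯ | (C (s - 1))ᵀ)`, where `(C u)ᵀ` is cut off
after column `k u`. It is a plain function since `Matrix` carries no `MeasurableSpace` instance. -/
def jointTransp (k : Fin s → ℕ) (n : ℕ) (C : Fin s → ℕ → ℕ → ZMod q) :
    Fin n → (Σ u, Fin (k u + 1)) → ZMod q :=
  fun i a ↦ C a.1 a.2 i

lemma measurable_jointTransp (k : Fin s → ℕ) (n : ℕ) :
    Measurable (jointTransp (q := q) k n) := by
  unfold jointTransp
  fun_prop

lemma sum_matVec_transp_eq_mulVec (k : Fin s → ℕ) {n : ℕ} (C : Fin s → ℕ → ℕ → ZMod q) (i : Fin n) :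
    ∑ u, matVec (transp (C u)) (k u) i = (of (jointTransp k n C) *ᵥ jointDigitVec q k) i := by
  simp only [matVec, transp, mulVec, dotProduct, of_apply, jointTransp, jointDigitVec,
    Fintype.sum_sigma, Finset.sum_range]

lemma digitVec_log_ne_zero (hq : 1 < q) {k : ℕ} (hk : k ≠ 0) :
    digitVec q k (Nat.log q k) ≠ 0 := by
  have hlt : k / q ^ Nat.log q k < q :=
    Nat.div_lt_of_lt_mul (pow_succ q _ ▸ Nat.lt_pow_succ_log_self hq k)
  have hpos : 0 < k / q ^ Nat.log q k := Nat.div_pos (Nat.pow_log_le_self q hk) (by positivity)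
  rw [digitVec, Nat.mod_eq_of_lt hlt, Ne, ZMod.natCast_eq_zero_iff]
  exact Nat.not_dvd_of_pos_of_lt hpos hlt

lemma span_range_jointDigitVec_eq_top [Fact q.Prime] {k : Fin s → ℕ} (hk : ∃ u, k u ≠ 0) :
    Ideal.span (Set.range (jointDigitVec q k)) = ⊤ := by
  obtain ⟨u, hu⟩ := hk
  have hdigit := digitVec_log_ne_zero (Fact.out : q.Prime).one_lt hu
  exact Ideal.eq_top_of_isUnit_mem _ (Ideal.subset_span
    ⟨⟨u, Nat.log q (k u), Nat.lt_succ_of_le (Nat.log_le_self q (k u))⟩, rfl⟩) hdigit.isUnit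

end JointDigits

namespace IsUniformMatrixTupleMeasure

variable {q s : ℕ} {μs : Measure (Fin s → ℕ → ℕ → ZMod q)}

lemma measure_forall_apply_eq (hμs : IsUniformMatrixTupleMeasure μs) {ι : Type*} [Fintype ι]
    {e : ι → Fin s × ℕ × ℕ} (he : Injective e) (g : ι → ZMod q) :
    μs {C | ∀ a, C (e a).1 (e a).2.1 (e a).2.2 = g a} = (q : ℝ≥0∞)⁻¹ ^ Fintype.card ι := by
  simpa [he.extend_apply] using hμs.2 (Finset.univ.map ⟨e, he⟩) (extend e g 0)

variable [NeZero q]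

lemma map_jointTransp (hμs : IsUniformMatrixTupleMeasure μs) (k : Fin s → ℕ) (n : ℕ) :
    μs.map (jointTransp k n) = uniformOn Set.univ := by
  let e : Fin n × (Σ u, Fin (k u + 1)) → Fin s × ℕ × ℕ := fun p ↦ (p.2.1, p.2.2, p.1)
  have he : Injective e := by
    rintro ⟨i, u, j⟩ ⟨i', u', j'⟩ h
    obtain ⟨rfl, hj, hi⟩ : u = u' ∧ (j : ℕ) = j' ∧ (i : ℕ) = i' := by simpa [e] using h
    rw [Fin.ext hi, Fin.ext hj]
  refine Measure.ext_of_singleton fun A ↦ ?_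
  have hfiber : jointTransp k n ⁻¹' {A} =
      {C | ∀ p, C (e p).1 (e p).2.1 (e p).2.2 = uncurry A p} := by
    ext C
    simp [funext_iff, jointTransp, e]
  rw [Measure.map_apply (measurable_jointTransp k n) (measurableSet_singleton A), hfiber,
    hμs.measure_forall_apply_eq he, uniformOn_univ_singleton]
  simp [ENNReal.inv_pow, ← pow_mul, mul_comm]

lemma map_jointTransp_mulVec (hμs : IsUniformMatrixTupleMeasure μs) {k : Fin s → ℕ}
    (hk : Ideal.span (Set.range (jointDigitVec q k)) = ⊤) (n : ℕ) :
    μs.map (fun C ↦ of (jointTransp k n C) *ᵥ jointDigitVec q k) = uniformOn Set.univ := by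
  rw [← map_mulVec_uniformOn_univ hk, ← hμs.map_jointTransp k n,
    Measure.map_map (measurable_of_finite _) (measurable_jointTransp k n)]
  rfl

end IsUniformMatrixTupleMeasure

theorem measure_nuLe_set_general (q s m : ℕ) [NeZero q] (k : Fin s → ℕ)
    (hk : Ideal.span (Set.range (jointDigitVec q k)) = ⊤)
    (μs : Measure (Fin s → ℕ → ℕ → ZMod q)) (hμs : IsUniformMatrixTupleMeasure μs) :
    μs {C : Fin s → ℕ → ℕ → ZMod q |
        nuLe (fun i ↦ ∑ u, matVec (transp (C u)) (k u) i) m}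
      = ((q : ℝ≥0∞)⁻¹) ^ (m - 1) := by
  let Φ : (Fin s → ℕ → ℕ → ZMod q) → Fin (m - 1) → ZMod q :=
    fun C ↦ of (jointTransp k (m - 1) C) *ᵥ jointDigitVec q k
  have hΦ : Measurable Φ :=
    (measurable_of_finite fun A ↦ of A *ᵥ jointDigitVec q k).comp (measurable_jointTransp k _)
  have hset : {C | nuLe (fun i ↦ ∑ u, matVec (transp (C u)) (k u) i) m} = Φ ⁻¹' {0} := by
    ext C
    simp [nuLe, Φ, funext_iff, Fin.forall_iff, ← sum_matVec_transp_eq_mulVec]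
  rw [hset, ← Measure.map_apply hΦ (measurableSet_singleton 0), hμs.map_jointTransp_mulVec hk,
    uniformOn_univ_singleton]
  simp [ENNReal.inv_pow]

/-- **Lemma 2.**  For `m ∈ ℕ` and `k₁, …, k_s ∈ ℕ₀` not all `0`, the set
`M_m(k₁,…,k_s) = {(C₁,…,C_s) : ν(C₁ᵀk⃗₁ + ⋯ + C_sᵀk⃗_s) ≤ −m}` has measure
`μ_s(M_m(k₁,…,k_s)) = q^{−(m−1)}`. -/
theorem measure_nuLe_set (q s m : ℕ) (hq : q.Prime) (hs : 1 ≤ s) (hm : 1 ≤ m)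
    (k : Fin s → ℕ) (hk : ∃ u, k u ≠ 0)
    (μs : Measure (Fin s → ℕ → ℕ → ZMod q)) (hμs : IsUniformMatrixTupleMeasure μs) :
    μs {C : Fin s → ℕ → ℕ → ZMod q |
        nuLe (fun i => ∑ u, matVec (transp (C u)) (k u) i) m}
      = ((q : ℝ≥0∞)⁻¹) ^ (m - 1) := by
  have := Fact.mk hq
  exact measure_nuLe_set_general q s m k (span_range_jointDigitVec_eq_top hk) μs hμs

end
end

section
/- Let q be a prime number, s ∈ ℕ, and P̄ ⊆ ℕ^s. Suppose that for each (k₁,…,k_s) ∈ P̄, with r_j = len(k_j) for j = 1,…,s, elements β₁(k₁),…,β_s(k_s) ∈ ℕ₀ are given such that for each j either β_j(k_j) = 0 or len(β_j(k_j)) > len(k_j), and not all of β₁(k₁),…,β_s(k_s) are zero. Let M̃ be the set of tuples (C₁,…,C_s) ∈ ((ZMod q)^{ℕ×ℕ})^s such that both ν(C₁ᵀk⃗₁ + ⋯ + C_sᵀk⃗_s) ≤ −(r₁+⋯+r_s) and ν(C₁ᵀ(k⃗₁+β⃗₁(k₁)) + ⋯ + C_sᵀ(k⃗_s+β⃗_s(k_s)))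 ≤ −⌊(r₁+⋯+r_s)/2⌋ hold for infinitely many (k₁,…,k_s) ∈ P̄. Then μ_s(M̃) = 0. -/
open MeasureTheory Filter
open scoped ENNReal

noncomputable section

/-!
For a fixed `k` the two conditions are homogeneous linear equations, one pair for each row index.
The first involves the entry at the leading digit of some `k_j ≠ 0`. The second, after subtracting
the first, involves the one at the leading digit of some `β_u`, beyond all digits of `k_u`.
So the conditions determine `(R - 1) + (⌊R/2⌋ - 1)` entries from the others, where
`R = r₁ + ⋯ + r_s`, and hold with probability of order at most `q^(-3R/2) = ∏ⱼ q^(-3rⱼ/2)`.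
As `q^rⱼ` is comparable to `kⱼ`, this is summable over `k`, and the Borel–Cantelli lemma applies.
-/

theorem summable_prod_pi {ι : Type*} [Fintype ι] {κ : ι → Type*} {f : ∀ i, κ i → ℝ}
    (hf₀ : ∀ i, 0 ≤ f i) (hf : ∀ i, Summable (f i)) :
    Summable fun k : ∀ i, κ i => ∏ i, f i (k i) := by
  classical
  have hprod (k : ∀ i, κ i) : 0 ≤ ∏ i, f i (k i) := Finset.prod_nonneg fun i _ => hf₀ i _
  refine summable_of_sum_le (c := ∏ i, ∑' n, f i n) hprod fun S => ?_
  have hsub : S ⊆ Fintype.piFinset fun i => S.image (· i) := fun k hk =>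
    Fintype.mem_piFinset.2 fun i => Finset.mem_image_of_mem (· i) hk
  calc ∑ k ∈ S, ∏ i, f i (k i)
      ≤ ∑ k ∈ Fintype.piFinset fun i => S.image (· i), ∏ i, f i (k i) :=
        Finset.sum_le_sum_of_subset_of_nonneg hsub fun k _ _ => hprod k
    _ = ∏ i, ∑ n ∈ S.image (· i), f i n := (Finset.prod_univ_sum _ _).symm
    _ ≤ ∏ i, ∑' n, f i n :=
        Finset.prod_le_prod (fun i _ => Finset.sum_nonneg fun n _ => hf₀ i n)
          fun i _ => (hf i).sum_le_tsum _ fun n _ => hf₀ i n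

theorem eq_of_sum_mul_eq {ι R : Type*} [Ring R] [NoZeroDivisors R] {J : Finset ι}
    {a x y : ι → R} {p : ι} (hp : p ∈ J) (ha : a p ≠ 0)
    (hxy : ∀ r ∈ J, r ≠ p → a r = 0 ∨ x r = y r)
    (h : ∑ r ∈ J, x r * a r = ∑ r ∈ J, y r * a r) : x p = y p := by
  have hsub : ∑ r ∈ J, (x r - y r) * a r = 0 := by
    simp only [sub_mul, Finset.sum_sub_distrib, h, sub_self]
  rw [Finset.sum_eq_single_of_mem p hp fun r hr hrp => ?_] at hsub
  · exact sub_eq_zero.1 ((mul_eq_zero.1 hsub).resolve_right ha)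
  · rcases hxy r hr hrp with h | h <;> simp [h]

theorem measure_le_of_determined {Ω κ α : Type*} [MeasurableSpace Ω] [Fintype α] [Nonempty α]
    [DecidableEq κ] {μ : Measure Ω} {X : κ → Ω → α} {S T : Finset κ} (hST : Disjoint S T)
    (hμ : ∀ g : κ → α, μ {ω | ∀ p ∈ S ∪ T, X p ω = g p} ≤
      (Fintype.card α : ℝ≥0∞)⁻¹ ^ (S ∪ T).card)
    {E : Set Ω} (hE : ∀ ω ∈ E, ∀ ω' ∈ E, (∀ p ∈ S, X p ω = X p ω') → ∀ p ∈ T, X p ω = X p ω') :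
    μ E ≤ (Fintype.card α : ℝ≥0∞)⁻¹ ^ T.card := by
  let fiber (h : S → α) : Set Ω := {ω ∈ E | ∀ p : S, X p ω = h p}
  have hfiber (h : S → α) : μ (fiber h) ≤ (Fintype.card α : ℝ≥0∞)⁻¹ ^ (S ∪ T).card := by
    rcases (fiber h).eq_empty_or_nonempty with hempty | ⟨ω₀, hω₀, hω₀S⟩
    · simp [hempty]
    · refine (measure_mono ?_).trans (hμ fun p => X p ω₀)
      rintro ω ⟨hω, hωS⟩ p hp
      have hS : ∀ p ∈ S, X p ω = X p ω₀ := fun p hp =>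
        (hωS ⟨p, hp⟩).trans (hω₀S ⟨p, hp⟩).symm
      exact (Finset.mem_union.1 hp).elim (hS p) (hE ω hω ω₀ hω₀ hS p)
  have hcover : E ⊆ ⋃ h, fiber h := fun ω hω =>
    Set.mem_iUnion.2 ⟨fun p => X p ω, hω, fun _ => rfl⟩
  calc μ E ≤ μ (⋃ h, fiber h) := measure_mono hcover
    _ ≤ ∑ h, μ (fiber h) := measure_iUnion_fintype_le _ _
    _ ≤ ∑ _h : S → α, (Fintype.card α : ℝ≥0∞)⁻¹ ^ (S ∪ T).card :=
        Finset.sum_le_sum fun h _ => hfiber h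
    _ = (Fintype.card α : ℝ≥0∞) ^ S.card *
          (Fintype.card α : ℝ≥0∞)⁻¹ ^ (S.card + T.card) := by
        simp [Finset.card_union_of_disjoint hST]
    _ = (Fintype.card α : ℝ≥0∞)⁻¹ ^ T.card := by
        rw [pow_add, ← mul_assoc, ← mul_pow,
          ENNReal.mul_inv_cancel (by simp) (ENNReal.natCast_ne_top _), one_pow, one_mul]

section Digits

variable {q : ℕ}

theorem digitVec_len_ne_zero (hq : 1 < q) {k : ℕ} (hk : k ≠ 0) : digitVec q k (len q k) ≠ 0 := by
  have hpos : 0 < k / q ^ Nat.log q k :=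
    Nat.div_pos (Nat.pow_log_le_self q hk) (pow_pos (by positivity) _)
  have hlt : k / q ^ Nat.log q k < q :=
    Nat.div_lt_of_lt_mul (pow_succ q _ ▸ Nat.lt_pow_succ_log_self hq k)
  rw [digitVec, len, Nat.mod_eq_of_lt hlt, Ne, ZMod.natCast_eq_zero_iff]
  exact Nat.not_dvd_of_pos_of_lt hpos hlt

theorem digitVec_eq_zero_of_len_lt (hq : 1 < q) {k j : ℕ} (hj : len q k < j) :
    digitVec q k j = 0 := by
  simp [digitVec, Nat.div_eq_of_lt (Nat.lt_pow_of_log_lt hq hj)]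

theorem ne_zero_of_len_lt {k b : ℕ} (h : len q k < len q b) : b ≠ 0 := by
  rintro rfl
  simp [len] at h

theorem summable_rpow_neg_len (hq : 1 < q) {p : ℝ} (hp : 1 < p) :
    Summable fun k : ℕ => (q : ℝ) ^ (-(p * len q k)) := by
  have hq₀ : (0 : ℝ) < q := by positivity
  refine Summable.of_nonneg_of_le (fun k => by positivity) (fun k => ?_)
    (((Real.summable_one_div_nat_add_rpow 1 p).2 hp).mul_left ((q : ℝ) ^ p))
  have hk : |(k : ℝ) + 1| ≤ (q : ℝ) ^ (len q k + 1 : ℝ) := by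
    rw [abs_of_pos (by positivity)]
    exact_mod_cast Nat.lt_pow_succ_log_self hq k
  rw [mul_one_div, le_div_iff₀ (by positivity)]
  calc (q : ℝ) ^ (-(p * len q k)) * |(k : ℝ) + 1| ^ p
      ≤ (q : ℝ) ^ (-(p * len q k)) * ((q : ℝ) ^ (len q k + 1 : ℝ)) ^ p := by gcongr
    _ = (q : ℝ) ^ p := by
        rw [← Real.rpow_mul hq₀.le, ← Real.rpow_add hq₀]
        ring_nf

end Digits

theorem inv_pow_le_mul_prod_rpow {ι : Type*} [Fintype ι] {x : ℝ} (hx : 1 ≤ x) (r : ι → ℕ) :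
    x⁻¹ ^ ((∑ j, r j - 1) + ((∑ j, r j) / 2 - 1)) ≤
      x ^ (5 / 2 : ℝ) * ∏ j, x ^ (-(3 / 2 * r j : ℝ)) := by
  have hx₀ : 0 < x := by positivity
  set R := ∑ j, r j with hR
  have hexp : (3 * R : ℝ) ≤ 2 * (((R - 1) + (R / 2 - 1) : ℕ) : ℝ) + 5 := by
    exact_mod_cast (by omega : 3 * R ≤ 2 * ((R - 1) + (R / 2 - 1)) + 5)
  calc x⁻¹ ^ ((R - 1) + (R / 2 - 1))
      = x ^ (-(((R - 1) + (R / 2 - 1) : ℕ) : ℝ)) := by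
        rw [Real.rpow_neg hx₀.le, Real.rpow_natCast, inv_pow]
    _ ≤ x ^ (5 / 2 + ∑ j, -(3 / 2 * r j : ℝ)) := by
        refine Real.rpow_le_rpow_of_exponent_le hx ?_
        rw [Finset.sum_neg_distrib, ← Finset.mul_sum, ← Nat.cast_sum, ← hR]
        linarith
    _ = x ^ (5 / 2 : ℝ) * ∏ j, x ^ (-(3 / 2 * r j : ℝ)) := by
        rw [Real.rpow_add hx₀, Real.rpow_sum_of_pos hx₀]

/-- The vector `C₁ᵀk⃗₁ + ⋯ + C_sᵀk⃗_s`, whose `ν` the theorem bounds; coordinates are indexed from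
`0`, as in `nuLe`. -/
def transpSum {q s : ℕ} (C : Fin s → ℕ → ℕ → ZMod q) (k : Fin s → ℕ) : ℕ → ZMod q :=
  fun i => ∑ u, matVec (transp (C u)) (k u) i

section TupleMeasure

variable {q s : ℕ}

theorem transpSum_apply_eq_sum (hq : 1 < q) {k : Fin s → ℕ} {N : ℕ} (hN : ∀ u, k u < N)
    (C : Fin s → ℕ → ℕ → ZMod q) (i : ℕ) :
    transpSum C k i =
      ∑ p ∈ Finset.univ ×ˢ Finset.range N, C p.1 p.2 i * digitVec q (k p.1) p.2 := by
  rw [Finset.sum_product]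
  refine Finset.sum_congr rfl fun u _ => ?_
  refine Finset.sum_subset (Finset.range_mono (hN u)) fun j _ hj => ?_
  have hlen : len q (k u) < j := (Nat.log_le_self q (k u)).trans_lt (by simpa using hj)
  rw [digitVec_eq_zero_of_len_lt hq hlen, mul_zero]

variable {μs : Measure (Fin s → ℕ → ℕ → ZMod q)}

theorem IsUniformMatrixTupleMeasure.measure_cylinder (hμs : IsUniformMatrixTupleMeasure μs)
    (F : Finset ((Fin s × ℕ) × ℕ)) (g : (Fin s × ℕ) × ℕ → ZMod q) :
    μs {C | ∀ e ∈ F, C e.1.1 e.1.2 e.2 = g e} = (q : ℝ≥0∞)⁻¹ ^ F.card := by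
  let assoc := Equiv.prodAssoc (Fin s) ℕ ℕ
  rw [← Finset.card_map assoc.toEmbedding, ← hμs.2 _ (g ∘ assoc.symm)]
  simp [assoc]

variable [Fact q.Prime]

theorem measure_sum_mul_eq_zero_le (hμs : IsUniformMatrixTupleMeasure μs)
    {J : Finset (Fin s × ℕ)} {a b : Fin s × ℕ → ZMod q} {p p' : Fin s × ℕ}
    (hp : p ∈ J) (hp' : p' ∈ J) (ha : a p ≠ 0) (ha' : a p' = 0) (hb' : b p' ≠ 0)
    {m n : ℕ} (hnm : n ≤ m) :
    μs {C | (∀ i < m, ∑ r ∈ J, C r.1 r.2 i * a r = 0) ∧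
        ∀ i < n, ∑ r ∈ J, C r.1 r.2 i * b r = 0} ≤ (q : ℝ≥0∞)⁻¹ ^ (m + n) := by
  have hne : p ≠ p' := fun h => ha (h ▸ ha')
  let pivots : Finset ((Fin s × ℕ) × ℕ) := {p} ×ˢ Finset.range m ∪ {p'} ×ˢ Finset.range n
  let free : Finset ((Fin s × ℕ) × ℕ) := (J ×ˢ Finset.range m) \ pivots
  have hcard : pivots.card = m + n := by
    rw [Finset.card_union_of_disjoint
      (Finset.disjoint_product.2 (.inl (Finset.disjoint_singleton.2 hne)))]
    simp
  refine (measure_le_of_determined (X := fun e C => C e.1.1 e.1.2 e.2) (S := free) (T := pivots)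
    Finset.sdiff_disjoint (fun g => ?_) fun C hC C' hC' hfree => ?_).trans_eq
      (by rw [ZMod.card, hcard])
  · rw [ZMod.card]
    exact (hμs.measure_cylinder _ g).le
  have hagree {i : ℕ} (hi : i < m) {r : Fin s × ℕ} (hr : r ∈ J) (hrp : r ≠ p) (hrp' : r ≠ p') :
      C r.1 r.2 i = C' r.1 r.2 i :=
    hfree (r, i) (by simp [free, pivots, hi, hr, hrp.symm, hrp'.symm])
  have hp_eq {i : ℕ} (hi : i < m) : C p.1 p.2 i = C' p.1 p.2 i :=
    eq_of_sum_mul_eq (x := fun r => C r.1 r.2 i) (y := fun r => C' r.1 r.2 i) hp ha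
      (fun r hr hrp => (eq_or_ne r p').imp (fun h => (congrArg a h).trans ha') (hagree hi hr hrp))
      ((hC.1 i hi).trans (hC'.1 i hi).symm)
  have hp'_eq {i : ℕ} (hi : i < n) : C p'.1 p'.2 i = C' p'.1 p'.2 i := by
    have him := hi.trans_le hnm
    refine eq_of_sum_mul_eq (x := fun r => C r.1 r.2 i) (y := fun r => C' r.1 r.2 i) hp' hb'
      (fun r hr hrp' => .inr ?_) ((hC.2 i hi).trans (hC'.2 i hi).symm)
    rcases eq_or_ne r p with rfl | hrp
    exacts [hp_eq him, hagree him hr hrp hrp']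
  rintro ⟨r, i⟩ hri
  simp only [pivots, Finset.mem_union, Finset.mem_product, Finset.mem_singleton,
    Finset.mem_range] at hri
  rcases hri with ⟨rfl, hi⟩ | ⟨rfl, hi⟩
  exacts [hp_eq hi, hp'_eq hi]

theorem measure_nuLe_and_nuLe_add_le (hμs : IsUniformMatrixTupleMeasure μs) {k b : Fin s → ℕ}
    (hk : k ≠ 0) (hkb : ∃ u, len q (k u) < len q (b u)) {m n : ℕ} (hnm : n ≤ m) :
    μs {C | nuLe (transpSum C k) m ∧ nuLe (transpSum C k + transpSum C b) n} ≤
      (q : ℝ≥0∞)⁻¹ ^ ((m - 1) + (n - 1)) := by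
  have hq : 1 < q := (Fact.out : q.Prime).one_lt
  obtain ⟨u, hu⟩ := Function.ne_iff.1 hk
  obtain ⟨v, hv⟩ := hkb
  obtain ⟨N, hN⟩ : ∃ N, ∀ w, k w < N ∧ b w < N :=
    (eventually_all.2 fun w => (eventually_gt_atTop (k w)).and (eventually_gt_atTop (b w))).exists
  have hpivot {l : Fin s → ℕ} (hl : ∀ w, l w < N) (w : Fin s) :
      (w, len q (l w)) ∈ Finset.univ ×ˢ Finset.range N := by
    simpa [len] using (Nat.log_le_self q (l w)).trans_lt (hl w)
  refine (measure_mono fun C hC => ?_).trans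
    (measure_sum_mul_eq_zero_le hμs (hpivot (fun w => (hN w).1) u) (hpivot (fun w => (hN w).2) v)
      (a := fun r => digitVec q (k r.1) r.2) (b := fun r => digitVec q (b r.1) r.2)
      (digitVec_len_ne_zero hq hu) (digitVec_eq_zero_of_len_lt hq hv)
      (digitVec_len_ne_zero hq (ne_zero_of_len_lt hv)) (Nat.sub_le_sub_right hnm 1))
  obtain ⟨hCk, hCb⟩ := hC
  refine ⟨fun i hi => ?_, fun i hi => ?_⟩
  · rw [← transpSum_apply_eq_sum hq fun w => (hN w).1]
    exact hCk i hi
  · rw [← transpSum_apply_eq_sum hq fun w => (hN w).2]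
    simpa [hCk i (hi.trans_le (Nat.sub_le_sub_right hnm 1))] using hCb i hi

theorem measure_doubly_small_nu_le (hμs : IsUniformMatrixTupleMeasure μs) {k b : Fin s → ℕ}
    (hkb : ∃ u, len q (k u) < len q (b u)) :
    μs {C | nuLe (transpSum C k) (∑ u, len q (k u)) ∧
        nuLe (transpSum C k + transpSum C b) ((∑ u, len q (k u)) / 2)} ≤
      ENNReal.ofReal ((q : ℝ) ^ (5 / 2 : ℝ) * ∏ u, (q : ℝ) ^ (-(3 / 2 * len q (k u) : ℝ))) := by
  have hq : q.Prime := Fact.out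
  have hq₁ : (1 : ℝ) ≤ q := by exact_mod_cast hq.one_le
  calc _ ≤ (q : ℝ≥0∞)⁻¹ ^ ((∑ u, len q (k u) - 1) + ((∑ u, len q (k u)) / 2 - 1)) := by
        rcases eq_or_ne k 0 with rfl | hk
        · have := hμs.1
          simpa [len] using prob_le_one
        · exact measure_nuLe_and_nuLe_add_le hμs hk hkb (Nat.div_le_self _ _)
    _ = ENNReal.ofReal ((q : ℝ)⁻¹ ^ ((∑ u, len q (k u) - 1) + ((∑ u, len q (k u)) / 2 - 1))) := by
        rw [ENNReal.ofReal_pow (by positivity), ENNReal.ofReal_inv_of_pos (by positivity),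
          ENNReal.ofReal_natCast]
    _ ≤ _ := ENNReal.ofReal_le_ofReal (inv_pow_le_mul_prod_rpow hq₁ fun u => len q (k u))

theorem measure_doubly_small_nu_infinitely_often_general (hμs : IsUniformMatrixTupleMeasure μs)
    {P : Set (Fin s → ℕ)} {β : (Fin s → ℕ) → Fin s → ℕ}
    (hβ : ∀ k ∈ P, ∃ u, len q (k u) < len q (β k u)) :
    μs {C | {k | k ∈ P ∧ nuLe (transpSum C k) (∑ u, len q (k u)) ∧
        nuLe (transpSum C k + transpSum C (β k)) ((∑ u, len q (k u)) / 2)}.Infinite} = 0 := by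
  let bound (k : Fin s → ℕ) : ℝ :=
    (q : ℝ) ^ (5 / 2 : ℝ) * ∏ u, (q : ℝ) ^ (-(3 / 2 * len q (k u) : ℝ))
  have hbound : Summable bound :=
    (summable_prod_pi (fun _ _ => by positivity) fun _ =>
      summable_rpow_neg_len (Fact.out : q.Prime).one_lt (by norm_num)).mul_left _
  have hle (k : Fin s → ℕ) :
      μs {C | k ∈ P ∧ nuLe (transpSum C k) (∑ u, len q (k u)) ∧
        nuLe (transpSum C k + transpSum C (β k)) ((∑ u, len q (k u)) / 2)} ≤
      ENNReal.ofReal (bound k) := by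
    by_cases hk : k ∈ P
    · simpa only [hk, true_and] using measure_doubly_small_nu_le hμs (hβ k hk)
    · simp [hk]
  exact ae_iff.1 (ae_finite_setOfPred_mem
    (ne_top_of_le_ne_top hbound.tsum_ofReal_ne_top (ENNReal.tsum_le_tsum hle)))

end TupleMeasure

/-- **Lemma 4.**  Let `P̄ ⊆ ℕ^s` and, for `(k₁,…,k_s) ∈ P̄` with `r_j = len(k_j)`, let
`β₁(k₁),…,β_s(k_s) ∈ ℕ₀` with `β_j(k_j) = 0` or `len(β_j(k_j)) > len(k_j)` for all `j`,
but not all of them zero.  Then the set `M̃` of tuples `(C₁,…,C_s)` with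
`ν(C₁ᵀk⃗₁ + ⋯ + C_sᵀk⃗_s) ≤ −(r₁+⋯+r_s)` and
`ν(C₁ᵀ(k⃗₁+β⃗₁(k₁)) + ⋯ + C_sᵀ(k⃗_s+β⃗_s(k_s))) ≤ −⌊(r₁+⋯+r_s)/2⌋`
for infinitely many `(k₁,…,k_s) ∈ P̄` is a `μ_s`-null set.
(Here `C_uᵀ(k⃗_u+β⃗_u(k_u)) = C_uᵀk⃗_u + C_uᵀβ⃗_u(k_u)`, digit vectors being added
componentwise modulo `q`.) -/
theorem measure_doubly_small_nu_infinitely_often (q s : ℕ) (hq : q.Prime) (hs : 1 ≤ s)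
    (Pbar : Set (Fin s → ℕ)) (hPbar : ∀ k ∈ Pbar, ∀ j, 1 ≤ k j)
    (β : Fin s → ℕ → ℕ)
    (hβ : ∀ k ∈ Pbar, ∀ j, β j (k j) = 0 ∨ len q (k j) < len q (β j (k j)))
    (hβ0 : ∀ k ∈ Pbar, ∃ j, β j (k j) ≠ 0)
    (μs : Measure (Fin s → ℕ → ℕ → ZMod q)) (hμs : IsUniformMatrixTupleMeasure μs) :
    μs {C : Fin s → ℕ → ℕ → ZMod q |
        {k : Fin s → ℕ | k ∈ Pbar ∧
          nuLe (fun i => ∑ u, matVec (transp (C u)) (k u) i) (∑ u, len q (k u)) ∧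
          nuLe (fun i => ∑ u, (matVec (transp (C u)) (k u) i +
              matVec (transp (C u)) (β u (k u)) i)) ((∑ u, len q (k u)) / 2)}.Infinite}
      = 0 := by
  have : Fact q.Prime := ⟨hq⟩
  have hlen : ∀ k ∈ Pbar, ∃ j, len q (k j) < len q (β j (k j)) := fun k hk =>
    (hβ0 k hk).imp fun j hj => (hβ k hk j).resolve_left hj
  simp only [Finset.sum_add_distrib]
  exact measure_doubly_small_nu_infinitely_often_general hμs (β := fun k j => β j (k j)) hlen
end
end

section
/- Let q be a prime number, s ∈ ℕ, and let P ⊆ ℕ^s be a set containing no two strongly dependent elements over ZMod q. Let F : ℕ₀^s → ℕ be such that Σ_{(k₁,…,k_s)∈P} q^{−F(len(k₁),…,len(k_s))} = ∞. Then the set M̄ of tuples (C₁,…,C_s) ∈ ((ZMod q)^{ℕ×ℕ})^s for which ν(C₁ᵀk⃗₁ + ⋯ + C_sᵀk⃗_s) ≤ −F(len(k₁),…,len(k_s)) holds for infinitely many (k₁,…,k_s) ∈ P has full measure: μ_s(M̄) = 1. -/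
open MeasureTheory Filter
open scoped ENNReal

noncomputable section

/-!
A uniform random vector over a field with `q` elements annihilates a finite-dimensional space `W`
of coefficient vectors with probability `q ^ (-dim W)`. Spaces meeting only in `0` therefore give
independent events, since their dimensions add up in the sum. The condition
`ν(C₁ᵀk⃗₁ + ⋯ + C_sᵀk⃗_s) ≤ -m` says that the entries of the matrices annihilate the vectors
`k⃗ ⊗ eᵢ` for `i < m - 1`, where `k⃗` is the concatenation of the digit vectors; for tuples
that are not strongly dependent these span spaces meeting only in `0`. Pairwise independence is
enough for the divergence part of the Borel-Cantelli lemma: apply Chebyshev's inequality to the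
number of events that occur.
-/

open ProbabilityTheory

section BorelCantelli

variable {Ω ι : Type*}

lemma sum_indicator_one_le_ncard {A : ι → Set Ω} {ω : Ω} (hfin : {i | ω ∈ A i}.Finite)
    (T : Finset ι) : (∑ i ∈ T, (A i).indicator (1 : Ω → ℝ)) ω ≤ {i | ω ∈ A i}.ncard := by
  classical
  have hcard : (T.filter (ω ∈ A ·)).card ≤ {i | ω ∈ A i}.ncard := by
    rw [← Set.ncard_coe_finset]
    exact Set.ncard_le_ncard (fun i hi => (Finset.mem_filter.1 hi).2) hfin
  simpa [Set.indicator_apply] using hcard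

variable [MeasurableSpace Ω] {μ : Measure Ω}

lemma indepFun_indicator_one_of_indepSet {A B : Set Ω} (h : IndepSet A B μ) :
    (A.indicator (1 : Ω → ℝ)) ⟂ᵢ[μ] (B.indicator (1 : Ω → ℝ)) := by
  rw [IndepFun_iff_Indep]
  refine indep_of_indep_of_le_left (indep_of_indep_of_le_right h ?_) ?_ <;>
    exact Measurable.comap_le
      (measurable_const.indicator (MeasurableSpace.measurableSet_generateFrom rfl))

lemma memLp_indicator_one [IsFiniteMeasure μ] (p : ℝ≥0∞) {A : Set Ω} (hA : MeasurableSet A) :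
    MemLp (A.indicator (1 : Ω → ℝ)) p μ :=
  memLp_indicator_const p hA 1 (Or.inr (measure_ne_top μ A))

lemma variance_indicator_one_le [IsProbabilityMeasure μ] {A : Set Ω} (hA : MeasurableSet A) :
    Var[A.indicator (1 : Ω → ℝ); μ] ≤ μ.real A := by
  refine (variance_le_expectation_sq (memLp_indicator_one 2 hA).aestronglyMeasurable).trans_eq ?_
  rw [sq, ← Set.inter_indicator_one, Set.inter_self, integral_indicator_one hA]

lemma integral_sum_indicator_one [IsFiniteMeasure μ] {A : ι → Set Ω} (hA : ∀ i, MeasurableSet (A i))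
    (T : Finset ι) :
    ∫ ω, (∑ i ∈ T, (A i).indicator (1 : Ω → ℝ)) ω ∂μ = ∑ i ∈ T, μ.real (A i) := by
  simp only [Finset.sum_apply]
  rw [integral_finsetSum T fun i _ => (memLp_indicator_one 1 (hA i)).integrable le_rfl]
  exact Finset.sum_congr rfl fun i _ => integral_indicator_one (hA i)

lemma variance_sum_indicator_one_le [IsProbabilityMeasure μ] {A : ι → Set Ω}
    (hA : ∀ i, MeasurableSet (A i))
    (hind : Pairwise fun i j => IndepSet (A i) (A j) μ) (T : Finset ι) :
    Var[∑ i ∈ T, (A i).indicator (1 : Ω → ℝ); μ] ≤ ∑ i ∈ T, μ.real (A i) := by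
  rw [IndepFun.variance_sum (fun i _ => memLp_indicator_one 2 (hA i))
    fun i _ j _ hij => indepFun_indicator_one_of_indepSet (hind hij)]
  exact Finset.sum_le_sum fun i _ => variance_indicator_one_le (hA i)

lemma measure_sum_indicator_one_le_half_le [IsProbabilityMeasure μ] {A : ι → Set Ω}
    (hA : ∀ i, MeasurableSet (A i))
    (hind : Pairwise fun i j => IndepSet (A i) (A j) μ) (T : Finset ι)
    (hT : 0 < ∑ i ∈ T, μ.real (A i)) :
    μ {ω | (∑ i ∈ T, (A i).indicator (1 : Ω → ℝ)) ω ≤ (∑ i ∈ T, μ.real (A i)) / 2} ≤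
      ENNReal.ofReal (4 / ∑ i ∈ T, μ.real (A i)) := by
  set N := ∑ i ∈ T, (A i).indicator (1 : Ω → ℝ)
  set m := ∑ i ∈ T, μ.real (A i)
  have hmean : ∫ ω, N ω ∂μ = m := integral_sum_indicator_one hA T
  have hvar : Var[N; μ] ≤ m := variance_sum_indicator_one_le hA hind T
  have hN : MemLp N 2 μ := memLp_finsetSum' T fun i _ => memLp_indicator_one 2 (hA i)
  calc μ {ω | N ω ≤ m / 2}
      ≤ μ {ω | m / 2 ≤ |N ω - ∫ ω, N ω ∂μ|} := measure_mono fun ω (hω : N ω ≤ m / 2) => by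
        rw [Set.mem_ofPred_eq, hmean, abs_sub_comm]
        exact le_trans (by linarith) (le_abs_self _)
    _ ≤ ENNReal.ofReal (Var[N; μ] / (m / 2) ^ 2) := meas_ge_le_variance_div_sq hN (half_pos hT)
    _ ≤ ENNReal.ofReal (m / (m / 2) ^ 2) := by gcongr
    _ = ENNReal.ofReal (4 / m) := by congr 1; field_simp; norm_num

lemma tendsto_sum_measureReal_atTop [IsFiniteMeasure μ] {A : ι → Set Ω}
    (hsum : ∑' i, μ (A i) = ⊤) :
    Tendsto (fun T : Finset ι => ∑ i ∈ T, μ.real (A i)) atTop atTop := by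
  have hsum_tendsto := (ENNReal.summable (f := fun i => μ (A i))).hasSum
  rw [hsum] at hsum_tendsto
  refine ENNReal.tendsto_ofReal_nhds_top.1 (hsum_tendsto.congr fun T => ?_)
  simp [ENNReal.ofReal_sum_of_nonneg]

lemma measure_forall_sum_indicator_one_le_eq_zero [IsProbabilityMeasure μ] {A : ι → Set Ω}
    (hA : ∀ i, MeasurableSet (A i)) (hind : Pairwise fun i j => IndepSet (A i) (A j) μ)
    (hsum : ∑' i, μ (A i) = ⊤) (c : ℝ) :
    μ {ω | ∀ T : Finset ι, (∑ i ∈ T, (A i).indicator (1 : Ω → ℝ)) ω ≤ c} = 0 := by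
  have hmean := tendsto_sum_measureReal_atTop hsum
  have hbound : Tendsto (fun T : Finset ι => ENNReal.ofReal (4 / ∑ i ∈ T, μ.real (A i)))
      atTop (nhds 0) := by
    simpa using ENNReal.tendsto_ofReal (hmean.const_div_atTop 4)
  refine nonpos_iff_eq_zero.1 (ge_of_tendsto hbound ?_)
  filter_upwards [hmean.eventually_gt_atTop 0, hmean.eventually_ge_atTop (2 * c)]
    with T hpos hlarge
  refine (measure_mono fun ω hω => ?_).trans
    (measure_sum_indicator_one_le_half_le hA hind T hpos)
  exact (hω T).trans (by linarith)

-- Mathlib's `measure_limsup_eq_one` needs mutual independence; here pairwise independence suffices.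
theorem ae_infinite_setOf_mem_of_pairwise_indepSet [IsProbabilityMeasure μ] {A : ι → Set Ω}
    (hA : ∀ i, MeasurableSet (A i)) (hind : Pairwise fun i j => IndepSet (A i) (A j) μ)
    (hsum : ∑' i, μ (A i) = ⊤) : ∀ᵐ ω ∂μ, {i | ω ∈ A i}.Infinite := by
  have hunbounded : ∀ᵐ ω ∂μ, ∀ n : ℕ,
      ¬ ∀ T : Finset ι, (∑ i ∈ T, (A i).indicator (1 : Ω → ℝ)) ω ≤ n :=
    ae_all_iff.2 fun n => measure_eq_zero_iff_ae_notMem.1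
      (measure_forall_sum_indicator_one_le_eq_zero hA hind hsum n)
  filter_upwards [hunbounded] with ω hω hfin
  exact hω _ (sum_indicator_one_le_ncard hfin)

end BorelCantelli

lemma disjoint_span_singleton_of_forall_ne_smul {K V : Type*} [DivisionRing K] [AddCommGroup V]
    [Module K V] {v w : V} (h : ∀ c : K, c ≠ 0 → v ≠ c • w) : Disjoint (K ∙ v) (K ∙ w) := by
  rw [Submodule.disjoint_span_singleton, Submodule.mem_span_singleton]
  rintro ⟨c, rfl⟩
  by_contra hne
  have hc : c ≠ 0 := left_ne_zero_of_smul hne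
  exact h c⁻¹ (inv_ne_zero hc) (inv_smul_smul₀ hc v).symm

section Pairing

variable {I K : Type*} [Field K]

/-- The pairing of vectors indexed by a finite set `F` of coordinates (extended by zero) with a
space `W` of finitely supported vectors. -/
def pairingOn (F : Finset I) (W : Submodule K (I →₀ K)) : (F → K) →ₗ[K] Module.Dual K W :=
  W.dualRestrict ∘ₗ (Finsupp.llift K K K I).toLinearMap ∘ₗ
    Function.ExtendByZero.linearMap K ((↑) : F → I)

lemma pairingOn_restrict {F : Finset I} {W : Submodule K (I →₀ K)}
    (hWF : W ≤ Finsupp.supported K K F) (x : I → K) (a : W) :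
    pairingOn F W (fun p => x p) a = Finsupp.linearCombination K x a := by
  refine Finset.sum_congr rfl fun p hp => ?_
  have hextend : Function.extend ((↑) : F → I) (fun p => x p) 0 p = x p :=
    Subtype.val_injective.extend_apply (fun p : F => x p) 0 ⟨p, hWF a.2 hp⟩
  simp [hextend]

lemma pairingOn_surjective {F : Finset I} {W : Submodule K (I →₀ K)}
    (hWF : W ≤ Finsupp.supported K K F) : Function.Surjective (pairingOn F W) := by
  intro f
  obtain ⟨g, rfl⟩ := f.exists_extend
  refine ⟨fun p => g (Finsupp.single p 1), LinearMap.ext fun a => ?_⟩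
  rw [pairingOn_restrict hWF fun p => g (Finsupp.single p 1)]
  have hg : Finsupp.linearCombination K (fun p => g (Finsupp.single p 1)) = g := by
    ext p; simp
  rw [hg, LinearMap.comp_apply, Submodule.subtype_apply]

lemma finrank_add_finrank_ker_pairingOn {F : Finset I} {W : Submodule K (I →₀ K)}
    (hWF : W ≤ Finsupp.supported K K F) :
    Module.finrank K W + Module.finrank K (pairingOn F W).ker = F.card := by
  have hrank := (pairingOn F W).finrank_range_add_finrank_ker
  rwa [LinearMap.range_eq_top.2 (pairingOn_surjective hWF), finrank_top,
    Subspace.dual_finrank_eq (K := K) (V := W), Module.finrank_fintype_fun_eq_card,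
    Fintype.card_coe] at hrank

lemma exists_finset_le_supported (W : Submodule K (I →₀ K)) [FiniteDimensional K W] :
    ∃ F : Finset I, W ≤ Finsupp.supported K K F := by
  classical
  obtain ⟨S, rfl⟩ := Submodule.fg_iff_finiteDimensional W |>.2 ‹_›
  refine ⟨S.biUnion Finsupp.support, Submodule.span_le.2 fun a ha => ?_⟩
  exact Finset.coe_subset.2 (Finset.subset_biUnion_of_mem Finsupp.support ha)

variable {β ι : Type*}

/-- The span of the tensors `v ⊗ eᵢ`, `i ∈ T`: the coefficient vectors of the linear forms
`x ↦ ⟨v, x i⟩` in the entries of a matrix with columns `x i`. -/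
def columnSpan (v : β →₀ K) (T : Finset ι) : Submodule K (β × ι →₀ K) :=
  Submodule.span K (Set.range fun i : T => v.mapDomain (·, (i : ι)))

instance (v : β →₀ K) (T : Finset ι) : FiniteDimensional K (columnSpan v T) :=
  FiniteDimensional.span_of_finite K (Set.finite_range _)

lemma finrank_columnSpan_le (v : β →₀ K) (T : Finset ι) :
    Module.finrank K (columnSpan v T) ≤ T.card :=
  (finrank_range_le_card _).trans_eq (Fintype.card_coe T)

lemma lcomapDomain_mem_span_singleton {v : β →₀ K} {T : Finset ι} {a : β × ι →₀ K}
    (ha : a ∈ columnSpan v T) (i : ι) :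
    Finsupp.lcomapDomain (R := K) (·, i) (Prod.mk_left_injective i) a ∈ K ∙ v := by
  rw [← Submodule.mem_comap]
  refine Submodule.span_le.2 ?_ ha
  rintro _ ⟨j, rfl⟩
  obtain rfl | hij := eq_or_ne i j
  · have hcolumn := Finsupp.leftInverse_lcomapDomain_mapDomain (R := K) (M := K)
      (fun b : β => (b, (j : ι))) (Prod.mk_left_injective _) v
    simp only [SetLike.mem_coe, Submodule.mem_comap]
    rw [hcolumn]
    exact Submodule.mem_span_singleton_self v
  · have hzero : Finsupp.lcomapDomain (R := K) (·, i) (Prod.mk_left_injective i)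
        (v.mapDomain (·, (j : ι))) = 0 := by
      ext b
      exact Finsupp.mapDomain_of_notMem_range v _ (by simp [hij.symm])
    simp only [SetLike.mem_coe, Submodule.mem_comap, hzero, zero_mem]

lemma disjoint_columnSpan {v w : β →₀ K} (h : Disjoint (K ∙ v) (K ∙ w)) (S T : Finset ι) :
    Disjoint (columnSpan v S) (columnSpan w T) := by
  refine Submodule.disjoint_def.2 fun a hav haw => Finsupp.ext fun ⟨b, i⟩ => ?_
  exact DFunLike.congr_fun (Submodule.disjoint_def.1 h _ (lcomapDomain_mem_span_singleton hav i)
    (lcomapDomain_mem_span_singleton haw i)) b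

end Pairing

section UniformFamily

variable {Ω I K : Type*} [MeasurableSpace Ω] [MeasurableSpace K]

/-- The random variables `X p` are independent and uniformly distributed on the finite set `K`,
expressed through the probabilities of finite cylinders. The empty cylinder makes `μ` a
probability measure. -/
structure IsUniformFamily (X : I → Ω → K) (μ : Measure Ω) : Prop where
  measurable (p : I) : Measurable (X p)
  measure_cylinder (F : Finset I) (g : I → K) :
    μ {ω | ∀ p ∈ F, X p ω = g p} = (Nat.card K : ℝ≥0∞)⁻¹ ^ F.card

namespace IsUniformFamily

variable {X : I → Ω → K} {μ : Measure Ω}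

lemma measurable_restrict (hX : IsUniformFamily X μ) (F : Finset I) :
    Measurable fun ω (p : F) => X p ω :=
  measurable_pi_lambda _ fun p => hX.measurable p

variable [Nonempty K]

lemma isProbabilityMeasure (hX : IsUniformFamily X μ) : IsProbabilityMeasure μ where
  measure_univ := by
    simpa using hX.measure_cylinder ∅ fun _ => Classical.arbitrary K

lemma measure_preimage_singleton (hX : IsUniformFamily X μ) (F : Finset I) (g : F → K) :
    μ ((fun ω (p : F) => X p ω) ⁻¹' {g}) = (Nat.card K : ℝ≥0∞)⁻¹ ^ F.card := by
  obtain ⟨h, rfl⟩ := Subtype.val_injective.surjective_comp_right g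
  rw [← hX.measure_cylinder F h]
  congr 1
  ext ω
  simp only [Set.mem_preimage, Set.mem_singleton_iff, Set.mem_ofPred_eq, funext_iff,
    Subtype.forall, Function.comp_apply]

lemma measure_preimage [Finite K] [MeasurableSingletonClass K] (hX : IsUniformFamily X μ)
    (F : Finset I) (S : Set (F → K)) :
    μ ((fun ω (p : F) => X p ω) ⁻¹' S) = Nat.card S * (Nat.card K : ℝ≥0∞)⁻¹ ^ F.card := by
  have hS := S.toFinite
  rw [← hS.coe_toFinset, ← sum_measure_preimage_singleton _ fun g _ =>
    hX.measurable_restrict F (measurableSet_singleton g)]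
  simp [hX.measure_preimage_singleton, Set.ncard_eq_toFinset_card S hS]

end IsUniformFamily

end UniformFamily

section AnnihilationEvent

variable {Ω I K : Type*} [Field K]

/-- The event that the random vector `X` lies in the annihilator of the space `W` of finitely
supported coefficient vectors. -/
def annihilationEvent (X : I → Ω → K) (W : Submodule K (I →₀ K)) : Set Ω :=
  {ω | ∀ a ∈ W, Finsupp.linearCombination K (fun p => X p ω) a = 0}

lemma annihilationEvent_sup (X : I → Ω → K) (V W : Submodule K (I →₀ K)) :
    annihilationEvent X (V ⊔ W) = annihilationEvent X V ∩ annihilationEvent X W := by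
  ext ω
  exact sup_le_iff (c := (Finsupp.linearCombination K fun p => X p ω).ker)

lemma annihilationEvent_columnSpan {β ι : Type*} (X : β × ι → Ω → K) (v : β →₀ K)
    (T : Finset ι) :
    annihilationEvent X (columnSpan v T) =
      {ω | ∀ i ∈ T, Finsupp.linearCombination K (fun b => X (b, i) ω) v = 0} := by
  ext ω
  refine (Submodule.span_le (p := (Finsupp.linearCombination K fun p => X p ω).ker)).trans ?_
  simp [Set.range_subset_iff, Finsupp.linearCombination_mapDomain, Function.comp_def]

lemma annihilationEvent_eq_preimage_ker_pairingOn (X : I → Ω → K) {F : Finset I}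
    {W : Submodule K (I →₀ K)} (hWF : W ≤ Finsupp.supported K K F) :
    annihilationEvent X W = (fun ω (p : F) => X p ω) ⁻¹' (pairingOn F W).ker := by
  ext ω
  simp [annihilationEvent, LinearMap.ext_iff, pairingOn_restrict hWF fun p => X p ω]

namespace IsUniformFamily

variable [Finite K] [MeasurableSpace K] [MeasurableSingletonClass K] [MeasurableSpace Ω]
  {X : I → Ω → K} {μ : Measure Ω}

lemma measurableSet_annihilationEvent (hX : IsUniformFamily X μ) (W : Submodule K (I →₀ K))
    [FiniteDimensional K W] : MeasurableSet (annihilationEvent X W) := by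
  obtain ⟨F, hWF⟩ := exists_finset_le_supported W
  rw [annihilationEvent_eq_preimage_ker_pairingOn X hWF]
  exact hX.measurable_restrict F (Set.toFinite _).measurableSet

theorem measure_annihilationEvent (hX : IsUniformFamily X μ) (W : Submodule K (I →₀ K))
    [FiniteDimensional K W] :
    μ (annihilationEvent X W) = (Nat.card K : ℝ≥0∞)⁻¹ ^ Module.finrank K W := by
  obtain ⟨F, hWF⟩ := exists_finset_le_supported W
  have hcancel : (Nat.card K : ℝ≥0∞) * (Nat.card K : ℝ≥0∞)⁻¹ = 1 :=
    ENNReal.mul_inv_cancel (Nat.cast_ne_zero.2 Nat.card_pos.ne') (ENNReal.natCast_ne_top _)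
  calc μ (annihilationEvent X W)
      = Nat.card (pairingOn F W).ker * (Nat.card K : ℝ≥0∞)⁻¹ ^ F.card := by
        rw [annihilationEvent_eq_preimage_ker_pairingOn X hWF, hX.measure_preimage]
        rfl
    _ = (Nat.card K * (Nat.card K : ℝ≥0∞)⁻¹) ^ Module.finrank K (pairingOn F W).ker *
          (Nat.card K : ℝ≥0∞)⁻¹ ^ Module.finrank K W := by
        rw [Module.natCard_eq_pow_finrank (K := K), ← finrank_add_finrank_ker_pairingOn hWF]
        push_cast
        ring
    _ = (Nat.card K : ℝ≥0∞)⁻¹ ^ Module.finrank K W := by rw [hcancel, one_pow, one_mul]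

theorem indepSet_annihilationEvent (hX : IsUniformFamily X μ) {V W : Submodule K (I →₀ K)}
    [FiniteDimensional K V] [FiniteDimensional K W] (hVW : Disjoint V W) :
    IndepSet (annihilationEvent X V) (annihilationEvent X W) μ := by
  have := hX.isProbabilityMeasure
  have hrank := Submodule.finrank_sup_add_finrank_inf_eq V W
  rw [hVW.eq_bot, finrank_bot, add_zero] at hrank
  refine (indepSet_iff_measure_inter_eq_mul (hX.measurableSet_annihilationEvent V)
    (hX.measurableSet_annihilationEvent W) μ).2 ?_
  rw [← annihilationEvent_sup]
  simp only [hX.measure_annihilationEvent, hrank, pow_add]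

theorem ae_infinite_setOf_linearCombination_eq_zero {β ι κ : Type*} {X : β × ι → Ω → K}
    (hX : IsUniformFamily X μ) {v : κ → β →₀ K}
    (hv : Pairwise fun k l => Disjoint (K ∙ v k) (K ∙ v l)) {T : κ → Finset ι}
    (hT : ∑' k, (Nat.card K : ℝ≥0∞)⁻¹ ^ (T k).card = ⊤) :
    ∀ᵐ ω ∂μ,
      {k | ∀ i ∈ T k, Finsupp.linearCombination K (fun b => X (b, i) ω) (v k) = 0}.Infinite := by
  have := hX.isProbabilityMeasure
  have hsum : ∑' k, μ (annihilationEvent X (columnSpan (v k) (T k))) = ⊤ := by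
    refine top_unique (hT.ge.trans (ENNReal.tsum_le_tsum fun k => ?_))
    rw [hX.measure_annihilationEvent]
    exact pow_le_pow_right_of_le_one' (by simp [Nat.one_le_iff_ne_zero, Nat.card_pos.ne'])
      (finrank_columnSpan_le (v k) (T k))
  have hae := ae_infinite_setOf_mem_of_pairwise_indepSet
    (fun k => hX.measurableSet_annihilationEvent (columnSpan (v k) (T k)))
    (fun k l hkl => hX.indepSet_annihilationEvent (disjoint_columnSpan (hv hkl) (T k) (T l))) hsum
  simpa only [annihilationEvent_columnSpan, Set.mem_ofPred_eq] using hae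

end IsUniformFamily

end AnnihilationEvent

section DigitVectors

lemma digitVec_eq_zero_of_lt {q k j : ℕ} (hq : 1 < q) (h : k < j) : digitVec q k j = 0 := by
  simp [digitVec, Nat.div_eq_of_lt (h.trans (Nat.lt_pow_self hq))]

/-- The digit vectors `k⃗₁, …, k⃗_s` of a tuple, concatenated into one finitely supported
vector. -/
def digitFinsupp {s : ℕ} (q : ℕ) (k : Fin s → ℕ) : Fin s × ℕ →₀ ZMod q :=
  ∑ u, ∑ j ∈ Finset.range (k u + 1), Finsupp.single (u, j) (digitVec q (k u) j)

lemma digitFinsupp_apply {q s : ℕ} (hq : 1 < q) (k : Fin s → ℕ) (u : Fin s) (a : ℕ) :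
    digitFinsupp q k (u, a) = digitVec q (k u) a := by
  have hzero : k u < a → digitVec q (k u) a = 0 := digitVec_eq_zero_of_lt hq
  simpa [digitFinsupp, Finsupp.finsetSum_apply, Finsupp.single_apply, ite_and] using
    fun h => (hzero h).symm

lemma linearCombination_digitFinsupp {q s : ℕ} (C : Fin s → ℕ → ℕ → ZMod q) (k : Fin s → ℕ)
    (i : ℕ) :
    Finsupp.linearCombination (ZMod q) (fun b : Fin s × ℕ => C b.1 b.2 i) (digitFinsupp q k) =
      ∑ u, matVec (transp (C u)) (k u) i := by
  simp [digitFinsupp, matVec, transp, mul_comm]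

lemma disjoint_span_digitFinsupp {q s : ℕ} [Fact q.Prime] {k l : Fin s → ℕ}
    (h : ¬∃ c : ZMod q, c ≠ 0 ∧ ∀ u, ∀ a, digitVec q (k u) a = c * digitVec q (l u) a) :
    Disjoint (ZMod q ∙ digitFinsupp q k) (ZMod q ∙ digitFinsupp q l) := by
  have hq : 1 < q := (Fact.out : q.Prime).one_lt
  refine disjoint_span_singleton_of_forall_ne_smul fun c hc hkl => h ⟨c, hc, fun u a => ?_⟩
  simpa [digitFinsupp_apply hq] using DFunLike.congr_fun hkl (u, a)

lemma IsUniformMatrixTupleMeasure.isUniformFamily {q s : ℕ}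
    {μs : Measure (Fin s → ℕ → ℕ → ZMod q)} (hμs : IsUniformMatrixTupleMeasure μs) :
    IsUniformFamily (fun (p : (Fin s × ℕ) × ℕ) (C : Fin s → ℕ → ℕ → ZMod q) => C p.1.1 p.1.2 p.2)
      μs where
  measurable p := by fun_prop
  measure_cylinder F g := by
    have hcyl := hμs.2 (F.map (Equiv.prodAssoc _ _ _).toEmbedding)
      (g ∘ (Equiv.prodAssoc _ _ _).symm)
    simpa using hcyl

end DigitVectors

theorem measure_small_nu_infinitely_often_eq_one_general {q s : ℕ} (hq : q.Prime)
    {P : Set (Fin s → ℕ)}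
    (hdep : ∀ k ∈ P, ∀ l ∈ P, k ≠ l →
      ¬∃ c : ZMod q, c ≠ 0 ∧ ∀ u, ∀ a, digitVec q (k u) a = c * digitVec q (l u) a)
    {m : (Fin s → ℕ) → ℕ} (hm : ∑' k : P, ((q : ℝ≥0∞) ^ m k)⁻¹ = ⊤)
    {μs : Measure (Fin s → ℕ → ℕ → ZMod q)} (hμs : IsUniformMatrixTupleMeasure μs) :
    μs {C : Fin s → ℕ → ℕ → ZMod q |
        {k : Fin s → ℕ | k ∈ P ∧
          nuLe (fun i => ∑ u, matVec (transp (C u)) (k u) i) (m k)}.Infinite} = 1 := by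
  have : Fact q.Prime := ⟨hq⟩
  have := hμs.1
  have hsum : ∑' k : P, (Nat.card (ZMod q) : ℝ≥0∞)⁻¹ ^ (Finset.range (m k - 1)).card = ⊤ := by
    refine top_unique (hm.ge.trans (ENNReal.tsum_le_tsum fun k => ?_))
    rw [Nat.card_zmod, Finset.card_range, ENNReal.inv_pow]
    exact pow_le_pow_right_of_le_one' (by simp [hq.one_le]) (Nat.sub_le _ _)
  have hae := hμs.isUniformFamily.ae_infinite_setOf_linearCombination_eq_zero
    (fun (k l : P) hkl => disjoint_span_digitFinsupp
      (hdep k k.2 l l.2 (Subtype.coe_injective.ne hkl))) hsum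
  refine (measure_congr (eventuallyEq_univ.2 ?_)).trans measure_univ
  filter_upwards [hae] with C hC
  refine (hC.image Subtype.val_injective.injOn).mono ?_
  rintro _ ⟨k, hk, rfl⟩
  refine ⟨k.2, fun i hi => ?_⟩
  exact (linearCombination_digitFinsupp C k i).symm.trans (hk i (Finset.mem_range.2 hi))

/-- **Lemma 6.**  Let `P ⊆ ℕ^s` contain no two strongly dependent elements and let
`F : ℕ₀^s → ℕ` satisfy `Σ_{(k₁,…,k_s)∈P} q^{−F(len k₁,…,len k_s)} = ∞`.  Then the set
`M̄` of tuples `(C₁,…,C_s)` with `ν(C₁ᵀk⃗₁ + ⋯ + C_sᵀk⃗_s) ≤ −F(len k₁,…,len k_s)` for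
infinitely many `(k₁,…,k_s) ∈ P` has full measure `μ_s(M̄) = 1`. -/
theorem measure_small_nu_infinitely_often_eq_one (q s : ℕ) (hq : q.Prime) (hs : 1 ≤ s)
    (P : Set (Fin s → ℕ)) (hP : ∀ k ∈ P, ∀ j, 1 ≤ k j)
    (hdep : ∀ k ∈ P, ∀ l ∈ P, k ≠ l →
      ¬∃ c : ZMod q, c ≠ 0 ∧ ∀ u, ∀ a, digitVec q (k u) a = c * digitVec q (l u) a)
    (F : (Fin s → ℕ) → ℕ)
    (hF : ∑' k : P, ((q : ℝ≥0∞) ^ F (fun j => len q ((k : Fin s → ℕ) j)))⁻¹ = ⊤)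
    (μs : Measure (Fin s → ℕ → ℕ → ZMod q)) (hμs : IsUniformMatrixTupleMeasure μs) :
    μs {C : Fin s → ℕ → ℕ → ZMod q |
        {k : Fin s → ℕ | k ∈ P ∧
          nuLe (fun i => ∑ u, matVec (transp (C u)) (k u) i)
            (F (fun j => len q (k j)))}.Infinite}
      = 1 :=
  measure_small_nu_infinitely_often_eq_one_general hq hdep
    (m := fun k => F fun j => len q (k j)) hF hμs

end
end
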